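/- For any two disjoint nonempty sets A, B ⊆ G with π(A) < π(B), the probability, starting from the stationary distribution, that A is hit strictly before B satisfies Pr_π[T_A < T_B] ≤ (2/(1−λ)) · (π(A)/π(B)) · log(π(B)/π(A)) + π(A) + π(A)/π(B). -/

import Mathlib

open MeasureTheory Finset
open scoped ENNReal

namespace HM

variable {G : Type*} [Fintype G] [DecidableEq G]

/-- `P` is a stochastic (transition) matrix. -/
def IsStochastic (P : Matrix G G ℝ) : Prop :=
  (∀ x y, 0 ≤ P x y) ∧ ∀ x, ∑ y, P x y = 1

/-- Irreducibility: every state reaches every other state. -/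
def IsIrreducible (P : Matrix G G ℝ) : Prop :=
  ∀ x y : G, ∃ t : ℕ, 0 < (P ^ t) x y

/-- Aperiodicity: the gcd of return times is `1` at every state. -/
def IsAperiodic (P : Matrix G G ℝ) : Prop :=
  ∀ x : G, ∀ d : ℕ, (∀ t : ℕ, 0 < (P ^ t) x x → d ∣ t) → d = 1

/-- `P` is reversible with respect to the full-support probability vector `pi`. -/
def IsReversible (P : Matrix G G ℝ) (pi : G → ℝ) : Prop :=
  (∀ x, 0 < pi x) ∧ (∑ x, pi x = 1) ∧ ∀ x y, pi x * P x y = pi y * P y x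

variable [MeasurableSpace G]

/-- `μ x` is the law of the Markov chain with transition matrix `P` started at `x`:
all finite-dimensional (cylinder) probabilities are given by products of transition
probabilities. -/
def IsMarkovChain (P : Matrix G G ℝ) (μ : G → Measure (ℕ → G)) : Prop :=
  (∀ x, IsProbabilityMeasure (μ x)) ∧
  ∀ (x : G) (t : ℕ) (w : ℕ → G),
    μ x {ω | ∀ i ≤ t, ω i = w i} =
      ENNReal.ofReal ((if w 0 = x then 1 else 0) * ∏ i ∈ Finset.range t, P (w i) (w (i + 1)))

/-- Hitting time `T_S = inf {t ≥ 0 : X_t ∈ S}`, with value `⊤` if `S` is never hit. -/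
noncomputable def hit (S : Set G) (ω : ℕ → G) : ℕ∞ :=
  sInf ((↑) '' {n : ℕ | ω n ∈ S})

/-- Return time `T_S^+ = inf {t ≥ 1 : X_t ∈ S}`, with value `⊤` if `S` is never hit. -/
noncomputable def hitPlus (S : Set G) (ω : ℕ → G) : ℕ∞ :=
  sInf ((↑) '' {n : ℕ | 1 ≤ n ∧ ω n ∈ S})

/-- The event `X_{T_S} = x` (in particular `T_S < ∞`). -/
def hitsAt (S : Set G) (x : G) : Set (ℕ → G) :=
  {ω | ∃ n : ℕ, hit S ω = (n : ℕ∞) ∧ ω n = x}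

/-- Harmonic measure on `S` from `y`: `h_{y,S}(x) = Pr_y[X_{T_S} = x]`. -/
noncomputable def harm (μ : G → Measure (ℕ → G)) (S : Set G) (y x : G) : ℝ :=
  (μ y (hitsAt S x)).toReal

/-- Harmonic measure on `S` from the stationary distribution:
`h_S(x) = ∑_y π(y) h_{y,S}(x)`. -/
noncomputable def harmStat (pi : G → ℝ) (μ : G → Measure (ℕ → G)) (S : Set G) (x : G) : ℝ :=
  ∑ y, pi y * harm μ S y x

/-- `π(S) = ∑_{x ∈ S} π(x)`. -/
noncomputable def piOf (pi : G → ℝ) (S : Set G) : ℝ :=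
  ∑ x, S.indicator pi x

/-- `λ = max_{j > 1} |λ_j|`, via the variational characterization: the largest absolute
value of the quadratic form of `P` on the orthogonal complement of the constants in
`L²(π)`.  For a reversible chain this equals the largest absolute value of a
non-Perron eigenvalue of `P`. -/
noncomputable def lam (P : Matrix G G ℝ) (pi : G → ℝ) : ℝ :=
  sSup {r : ℝ | ∃ f : G → ℝ, ∑ x, pi x * f x = 0 ∧ ∑ x, pi x * f x ^ 2 = 1 ∧
    r = |∑ x, pi x * (f x * ∑ y, P x y * f y)|}

/-- `π_min = min_x π(x)`. -/
noncomputable def pimin (pi : G → ℝ) : ℝ := ⨅ x, pi x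

/-- `π_max = max_x π(x)`. -/
noncomputable def pimax (pi : G → ℝ) : ℝ := ⨆ x, pi x

/-- `u(P) = min_{x ≠ y} Pr_x[T_y < T_x^+]`. -/
noncomputable def uP (μ : G → Measure (ℕ → G)) : ℝ :=
  sInf {r : ℝ | ∃ x y : G, x ≠ y ∧
    r = (μ x {ω | hit {y} ω < hitPlus {x} ω}).toReal}

/-- `E_x[T_S^+]` (as an extended nonnegative real, then converted to `ℝ`). -/
noncomputable def expHitPlus (μ : G → Measure (ℕ → G)) (S : Set G) (x : G) : ℝ :=
  (∫⁻ ω, (hitPlus S ω : ℝ≥0∞) ∂ μ x).toReal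

/-- The number of distinct states visited strictly before the return time `T_S^+`,
i.e. `|{X_0, X_1, …, X_{T_S^+ − 1}}|`. -/
noncomputable def visited (S : Set G) (ω : ℕ → G) : ℕ :=
  Set.ncard {g : G | ∃ n : ℕ, (n : ℕ∞) < hitPlus S ω ∧ ω n = g}




/-! Helper lemmas. -/

/-- The bilinear form `⟨f, P g⟩_π`. -/
noncomputable def bform (P : Matrix G G ℝ) (pi : G → ℝ) (f g : G → ℝ) : ℝ :=
  ∑ x, pi x * (f x * ∑ y, P x y * g y)

/-- Squared norm in `L²(π)`. -/
noncomputable def nsq (pi : G → ℝ) (f : G → ℝ) : ℝ := ∑ x, pi x * f x ^ 2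

lemma bform_eq (P : Matrix G G ℝ) (pi : G → ℝ) (f g : G → ℝ) :
    bform P pi f g = ∑ x, ∑ y, pi x * P x y * (f x * g y) := by
  unfold bform
  refine Finset.sum_congr rfl fun x _ => ?_
  rw [Finset.mul_sum, Finset.mul_sum]
  refine Finset.sum_congr rfl fun y _ => ?_
  ring

lemma sum_row {P : Matrix G G ℝ} {pi : G → ℝ} (hP : IsStochastic P) (u : G → ℝ) :
    ∑ x, ∑ y, pi x * P x y * u x = ∑ x, pi x * u x := by
  refine Finset.sum_congr rfl fun x _ => ?_
  rw [← Finset.sum_mul, ← Finset.mul_sum, hP.2 x, mul_one]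

lemma sum_col {P : Matrix G G ℝ} {pi : G → ℝ} (hP : IsStochastic P) (hrev : IsReversible P pi)
    (u : G → ℝ) :
    ∑ x, ∑ y, pi x * P x y * u y = ∑ x, pi x * u x := by
  rw [Finset.sum_comm, ← sum_row hP u]
  refine Finset.sum_congr rfl fun x _ => Finset.sum_congr rfl fun y _ => ?_
  rw [hrev.2.2]

lemma bform_symm {P : Matrix G G ℝ} {pi : G → ℝ} (hrev : IsReversible P pi) (f g : G → ℝ) :
    bform P pi f g = bform P pi g f := by
  rw [bform_eq, bform_eq, Finset.sum_comm]
  refine Finset.sum_congr rfl fun x _ => Finset.sum_congr rfl fun y _ => ?_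
  rw [hrev.2.2]; ring

lemma nsq_add_bform {P : Matrix G G ℝ} {pi : G → ℝ} (hP : IsStochastic P)
    (hrev : IsReversible P pi) (f : G → ℝ) (s : ℝ) (hs : s ^ 2 = 1) :
    ∑ x, ∑ y, pi x * P x y * (f x - s * f y) ^ 2 = 2 * (nsq pi f - s * bform P pi f f) := by
  have h1 := sum_row (pi := pi) hP (fun x => f x ^ 2)
  have h2 := sum_col hP hrev (fun x => f x ^ 2)
  have : ∑ x, ∑ y, pi x * P x y * (f x - s * f y) ^ 2 =
      ∑ x, ∑ y, pi x * P x y * f x ^ 2 + ∑ x, ∑ y, pi x * P x y * f y ^ 2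
        - 2 * s * ∑ x, ∑ y, pi x * P x y * (f x * f y) := by
    simp only [Finset.mul_sum, ← Finset.sum_add_distrib, ← Finset.sum_sub_distrib]
    refine Finset.sum_congr rfl fun x _ => Finset.sum_congr rfl fun y _ => ?_
    linear_combination (pi x * P x y * f y ^ 2) * hs
  rw [this, h1, h2, bform_eq]
  unfold nsq
  ring

lemma pow_nonneg' {P : Matrix G G ℝ} (hP : IsStochastic P) (t : ℕ) (x y : G) :
    0 ≤ (P ^ t) x y := by
  induction t generalizing x y with
  | zero => rw [pow_zero, Matrix.one_apply]; split_ifs <;> norm_num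
  | succ t ih =>
    rw [pow_succ, Matrix.mul_apply]
    exact Finset.sum_nonneg fun z _ => mul_nonneg (ih x z) (hP.1 z y)

lemma pow_prop {P : Matrix G G ℝ} (hP : IsStochastic P) (f : G → ℝ) (s : ℝ) (hs : s ^ 2 = 1)
    (h : ∀ x y, 0 < P x y → f x = s * f y) (t : ℕ) (x y : G) (ht : 0 < (P ^ t) x y) :
    f x = s ^ t * f y := by
  induction t generalizing x y with
  | zero =>
    rw [pow_zero, Matrix.one_apply] at ht
    split_ifs at ht with hxy
    · simp [hxy]
    · exact absurd ht (lt_irrefl _)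
  | succ t ih =>
    rw [pow_succ, Matrix.mul_apply] at ht
    obtain ⟨z, -, hz⟩ := Finset.exists_lt_of_sum_lt (s := Finset.univ) (f := fun _ : G => (0:ℝ))
      (by simpa using ht)
    have h1 := pow_nonneg' hP t x z
    have h2 := hP.1 z y
    have h1' : 0 < (P ^ t) x z := lt_of_le_of_ne h1 (by rintro h; rw [← h] at hz; simp at hz)
    have h2' : 0 < P z y := lt_of_le_of_ne h2 (by rintro h; rw [← h] at hz; simp at hz)
    rw [ih x z h1', h z y h2', pow_succ]; ring

lemma edge_prop {P : Matrix G G ℝ} {pi : G → ℝ} (hP : IsStochastic P)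
    (hrev : IsReversible P pi) (f : G → ℝ) (s : ℝ) (hs : s ^ 2 = 1)
    (hle : nsq pi f ≤ s * bform P pi f f) (x y : G) (hxy : 0 < P x y) : f x = s * f y := by
  have h0 := nsq_add_bform hP hrev f s hs
  have hnn : ∀ x y, 0 ≤ pi x * P x y * (f x - s * f y) ^ 2 := fun x y =>
    mul_nonneg (mul_nonneg (hrev.1 x).le (hP.1 x y)) (sq_nonneg _)
  have h1 : ∑ x, ∑ y, pi x * P x y * (f x - s * f y) ^ 2 = 0 :=
    le_antisymm (by rw [h0]; linarith)
      (Finset.sum_nonneg fun x _ => Finset.sum_nonneg fun y _ => hnn x y)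
  rw [Finset.sum_eq_zero_iff_of_nonneg
    (fun x _ => Finset.sum_nonneg fun y _ => hnn x y)] at h1
  have h2 := h1 x (Finset.mem_univ _)
  rw [Finset.sum_eq_zero_iff_of_nonneg (fun y _ => hnn x y)] at h2
  have h3 := h2 y (Finset.mem_univ _)
  have h4 : pi x * P x y ≠ 0 := (mul_pos (hrev.1 x) hxy).ne'
  have h5 : (f x - s * f y) ^ 2 = 0 := (mul_eq_zero.1 h3).resolve_left h4
  have := pow_eq_zero_iff (two_ne_zero) |>.1 h5
  linarith

lemma abs_bform_lt {P : Matrix G G ℝ} {pi : G → ℝ} (hP : IsStochastic P)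
    (hirr : IsIrreducible P) (hap : IsAperiodic P)
    (hrev : IsReversible P pi) (f : G → ℝ) (hm : ∑ x, pi x * f x = 0)
    (hN : ∑ x, pi x * f x ^ 2 = 1) : |bform P pi f f| < 1 := by
  have hne : ∃ x, f x ≠ 0 := by
    by_contra! h
    simp [h] at hN
  obtain ⟨x, hx⟩ := hne
  rw [abs_lt]
  constructor
  · by_contra! h
    have he := edge_prop hP hrev f (-1) (by norm_num) (by unfold nsq; rw [hN]; linarith)
    have := hap x 2 (fun t ht => by
      have h1 := pow_prop hP f (-1) (by norm_num) he t x x ht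
      rcases Nat.even_or_odd t with h2 | h2
      · exact h2.two_dvd
      · rw [h2.neg_one_pow] at h1
        exact absurd (by linarith) hx)
    omega
  · by_contra! h
    have he := edge_prop hP hrev f 1 (by norm_num) (by unfold nsq; rw [hN]; linarith)
    have hc : ∀ y, f y = f x := fun y => by
      obtain ⟨t, ht⟩ := hirr y x
      have h1 := pow_prop hP f 1 (by norm_num) he t y x ht
      simpa using h1
    simp only [hc] at hm
    rw [← Finset.sum_mul, hrev.2.1, one_mul] at hm
    exact hx hm

lemma isCompact_sphere' {P : Matrix G G ℝ} {pi : G → ℝ} (hrev : IsReversible P pi) :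
    IsCompact {f : G → ℝ | ∑ x, pi x * f x = 0 ∧ ∑ x, pi x * f x ^ 2 = 1} := by
  refine IsCompact.of_isClosed_subset
    (isCompact_univ_pi (fun x : G => isCompact_Icc (a := -(1 + 1 / pi x)) (b := 1 + 1 / pi x)))
    ?_ ?_
  · rw [Set.ofPred_and]
    exact (isClosed_eq (by fun_prop) (by fun_prop)).inter
      (isClosed_eq (by fun_prop) (by fun_prop))
  · rintro f ⟨-, hf⟩ x -
    have hx := hrev.1 x
    have h1 : pi x * f x ^ 2 ≤ 1 := by
      rw [← hf]
      exact Finset.single_le_sum (f := fun x => pi x * f x ^ 2)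
        (fun y _ => mul_nonneg (hrev.1 y).le (sq_nonneg _)) (Finset.mem_univ x)
    have h2 : f x ^ 2 ≤ 1 / pi x := by
      rw [le_div_iff₀ hx]; linarith
    have h3 : 0 < 1 / pi x := by positivity
    rw [Set.mem_Icc, ← abs_le]
    apply abs_le_of_sq_le_sq _ (by positivity)
    nlinarith

lemma lam_bdd {P : Matrix G G ℝ} {pi : G → ℝ} (hP : IsStochastic P)
    (hirr : IsIrreducible P) (hap : IsAperiodic P) (hrev : IsReversible P pi) :
    BddAbove {r : ℝ | ∃ f : G → ℝ, ∑ x, pi x * f x = 0 ∧ ∑ x, pi x * f x ^ 2 = 1 ∧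
    r = |∑ x, pi x * (f x * ∑ y, P x y * f y)|} := by
  refine ⟨1, ?_⟩
  rintro r ⟨f, h1, h2, rfl⟩
  exact (abs_bform_lt hP hirr hap hrev f h1 h2).le

lemma lam_nonneg (P : Matrix G G ℝ) (pi : G → ℝ) : 0 ≤ lam P pi := by
  apply Real.sSup_nonneg
  rintro r ⟨f, h1, h2, rfl⟩
  exact abs_nonneg _

lemma lam_lt_one {P : Matrix G G ℝ} {pi : G → ℝ} (hP : IsStochastic P)
    (hirr : IsIrreducible P) (hap : IsAperiodic P) (hrev : IsReversible P pi) :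
    lam P pi < 1 := by
  by_cases hne : {f : G → ℝ | ∑ x, pi x * f x = 0 ∧ ∑ x, pi x * f x ^ 2 = 1}.Nonempty
  · obtain ⟨f, hf, hmax⟩ := (isCompact_sphere' (P := P) hrev).exists_isMaxOn hne
      (f := fun f => |∑ x, pi x * (f x * ∑ y, P x y * f y)|) (by fun_prop)
    refine lt_of_le_of_lt ?_ (abs_bform_lt hP hirr hap hrev f hf.1 hf.2)
    refine csSup_le ⟨_, f, hf.1, hf.2, rfl⟩ ?_
    rintro r ⟨g, h1, h2, rfl⟩
    exact hmax ⟨h1, h2⟩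
  · have : {r : ℝ | ∃ f : G → ℝ, ∑ x, pi x * f x = 0 ∧ ∑ x, pi x * f x ^ 2 = 1 ∧
        r = |∑ x, pi x * (f x * ∑ y, P x y * f y)|} = ∅ := by
      rw [Set.eq_empty_iff_forall_notMem]
      rintro r ⟨g, h1, h2, rfl⟩
      exact hne ⟨g, h1, h2⟩
    unfold lam
    rw [this, Real.sSup_empty]
    norm_num

lemma bform_smul (P : Matrix G G ℝ) (pi : G → ℝ) (c : ℝ) (f : G → ℝ) :
    bform P pi (fun x => c * f x) (fun x => c * f x) = c ^ 2 * bform P pi f f := by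
  simp only [bform_eq, Finset.mul_sum]
  refine Finset.sum_congr rfl fun x _ => Finset.sum_congr rfl fun y _ => ?_
  ring

lemma gap_bound {P : Matrix G G ℝ} {pi : G → ℝ} (hP : IsStochastic P)
    (hirr : IsIrreducible P) (hap : IsAperiodic P) (hrev : IsReversible P pi)
    (h : G → ℝ) (hm : ∑ x, pi x * h x = 0) :
    |bform P pi h h| ≤ lam P pi * nsq pi h := by
  have hnn : ∀ x ∈ (Finset.univ : Finset G), 0 ≤ pi x * h x ^ 2 :=
    fun x _ => mul_nonneg (hrev.1 x).le (sq_nonneg _)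
  have hN : 0 ≤ nsq pi h := Finset.sum_nonneg hnn
  rcases hN.eq_or_lt with h0 | h0
  · have hz : ∀ x, h x = 0 := fun x => by
      have := (Finset.sum_eq_zero_iff_of_nonneg hnn).1 h0.symm x (Finset.mem_univ x)
      simpa [(hrev.1 x).ne'] using this
    simp [bform, nsq, hz]
  · set c := (Real.sqrt (nsq pi h))⁻¹ with hc
    have hc2 : c ^ 2 = (nsq pi h)⁻¹ := by
      rw [hc, inv_pow, Real.sq_sqrt hN]
    have : |bform P pi (fun x => c * h x) (fun x => c * h x)| ≤ lam P pi := by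
      apply le_csSup (lam_bdd hP hirr hap hrev)
      refine ⟨fun x => c * h x, ?_, ?_, rfl⟩
      · have : ∑ x, pi x * (c * h x) = c * ∑ x, pi x * h x := by
          rw [Finset.mul_sum]; exact Finset.sum_congr rfl fun x _ => by ring
        rw [this, hm, mul_zero]
      · have : ∑ x, pi x * (c * h x) ^ 2 = c ^ 2 * nsq pi h := by
          unfold nsq
          rw [Finset.mul_sum]; exact Finset.sum_congr rfl fun x _ => by ring
        rw [this, hc2, inv_mul_cancel₀ h0.ne']
    rw [bform_smul, abs_mul, hc2, abs_of_pos (inv_pos.2 h0), inv_mul_le_iff₀ h0] at this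
    linarith

lemma piOf_compl {P : Matrix G G ℝ} {pi : G → ℝ} (hrev : IsReversible P pi) (B : Set G) :
    ∑ x, pi x * (Bᶜ.indicator (fun _ => (1:ℝ)) x) ^ 2 = 1 - piOf pi B := by
  have h1 := hrev.2.1
  rw [piOf, eq_sub_iff_add_eq, ← Finset.sum_add_distrib, ← h1]
  refine Finset.sum_congr rfl fun x _ => ?_
  rw [h1]
  by_cases hx : x ∈ B <;> simp [hx]

/-- Quadratic form bound for functions vanishing on `B`. -/
lemma supp_bound {P : Matrix G G ℝ} {pi : G → ℝ} (hP : IsStochastic P)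
    (hirr : IsIrreducible P) (hap : IsAperiodic P) (hrev : IsReversible P pi)
    (B : Set G) (g : G → ℝ) (hg : ∀ x ∈ B, g x = 0) :
    |bform P pi g g| ≤ (1 - (1 - lam P pi) * piOf pi B) * nsq pi g := by
  set c := ∑ x, pi x * g x with hc
  have hh := gap_bound hP hirr hap hrev (fun x => g x - c) (by
    simp only [mul_sub, Finset.sum_sub_distrib, ← Finset.sum_mul, hrev.2.1]; simp [hc])
  have h1 : bform P pi (fun x => g x - c) (fun x => g x - c) = bform P pi g g - c ^ 2 := by
    have e1 := sum_row (pi := pi) hP g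
    have e2 := sum_col hP hrev g
    have e3 := sum_row (pi := pi) hP (fun _ => 1)
    have : bform P pi (fun x => g x - c) (fun x => g x - c) =
      bform P pi g g - c * ∑ x, ∑ y, pi x * P x y * g x - c * ∑ x, ∑ y, pi x * P x y * g y
        + c ^ 2 * ∑ x, ∑ y, pi x * P x y * 1 := by
      simp only [bform_eq, Finset.mul_sum, ← Finset.sum_add_distrib, ← Finset.sum_sub_distrib]
      refine Finset.sum_congr rfl fun x _ => Finset.sum_congr rfl fun y _ => ?_
      ring
    rw [this, e1, e2, e3, ← hc]
    simp only [mul_one, hrev.2.1]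
    ring
  have h2 : nsq pi (fun x => g x - c) = nsq pi g - c ^ 2 := by
    have : nsq pi (fun x => g x - c) = nsq pi g - 2 * c * ∑ x, pi x * g x
        + c ^ 2 * ∑ x, pi x := by
      simp only [nsq, Finset.mul_sum, ← Finset.sum_add_distrib, ← Finset.sum_sub_distrib]
      exact Finset.sum_congr rfl fun x _ => by ring
    rw [this, ← hc, hrev.2.1]; ring
  have h3 : c ^ 2 ≤ (1 - piOf pi B) * nsq pi g := by
    have := Finset.sum_sq_le_sum_mul_sum_of_sq_eq_mul Finset.univ
      (r := fun x => pi x * g x)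
      (f := fun x => pi x * (Bᶜ.indicator (fun _ => (1:ℝ)) x) ^ 2) (g := fun x => pi x * g x ^ 2)
      (fun x _ => mul_nonneg (hrev.1 x).le (sq_nonneg _))
      (fun x _ => mul_nonneg (hrev.1 x).le (sq_nonneg _))
      (fun x _ => by
        by_cases hx : x ∈ B
        · simp [hx, hg x hx]
        · simp [hx]; ring)
    rwa [piOf_compl hrev] at this
  rw [h1, h2] at hh
  have h4 := lam_lt_one hP hirr hap hrev
  have h5 : |bform P pi g g| ≤ |bform P pi g g - c ^ 2| + c ^ 2 := by
    calc |bform P pi g g| = |(bform P pi g g - c ^ 2) + c ^ 2| := by ring_nf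
      _ ≤ _ := (abs_add_le _ _).trans (by rw [abs_of_nonneg (sq_nonneg c)])
  nlinarith

lemma contract {P : Matrix G G ℝ} {pi : G → ℝ} (hP : IsStochastic P)
    (hirr : IsIrreducible P) (hap : IsAperiodic P) (hrev : IsReversible P pi)
    (B : Set G) (f g : G → ℝ) (hf : ∀ x ∈ B, f x = 0) (hg : ∀ x ∈ B, g x = 0)
    (hfg : ∀ x ∉ B, f x = ∑ y, P x y * g y) (ρ : ℝ) (hρ : ρ = 1 - (1 - lam P pi) * piOf pi B)
    (hpos : 0 < ρ) : nsq pi f ≤ ρ ^ 2 * nsq pi g := by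
  have h1 : bform P pi f g = nsq pi f := by
    refine Finset.sum_congr rfl fun x _ => ?_
    by_cases hx : x ∈ B
    · simp [hf x hx]
    · rw [← hfg x hx]; ring
  have hp := supp_bound hP hirr hap hrev B (fun x => ρ * g x + f x)
    (fun x hx => by simp [hf x hx, hg x hx])
  have hn := supp_bound hP hirr hap hrev B (fun x => ρ * g x - f x)
    (fun x hx => by simp [hf x hx, hg x hx])
  rw [← hρ] at hp hn
  have h2 : bform P pi (fun x => ρ * g x + f x) (fun x => ρ * g x + f x)
      - bform P pi (fun x => ρ * g x - f x) (fun x => ρ * g x - f x)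
      = 2 * ρ * bform P pi f g + 2 * ρ * bform P pi g f := by
    simp only [bform_eq, Finset.mul_sum, ← Finset.sum_add_distrib, ← Finset.sum_sub_distrib]
    refine Finset.sum_congr rfl fun x _ => Finset.sum_congr rfl fun y _ => ?_
    ring
  have h3 : nsq pi (fun x => ρ * g x + f x) + nsq pi (fun x => ρ * g x - f x)
      = 2 * ρ ^ 2 * nsq pi g + 2 * nsq pi f := by
    simp only [nsq, Finset.mul_sum, ← Finset.sum_add_distrib]
    exact Finset.sum_congr rfl fun x _ => by ring
  rw [← bform_symm hrev f g, h1] at h2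
  have h4 := (abs_le.1 hp).2
  have h5 := (abs_le.1 hn).1
  have h6 : ρ * (4 * nsq pi f) ≤ ρ * (2 * ρ ^ 2 * nsq pi g + 2 * nsq pi f) := by
    rw [← h3]; linarith
  have := le_of_mul_le_mul_left h6 hpos
  linarith

/-- Backward recursion for path probabilities. -/
noncomputable def Rec (P : Matrix G G ℝ) (S T : Set G) : ℕ → G → ℝ
  | 0 => T.indicator (fun _ => 1)
  | n + 1 => fun z => ∑ y, P z y * S.indicator (Rec P S T n) y

lemma meas_coord [MeasurableSingletonClass G] (S : Set G) (i : ℕ) :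
    MeasurableSet {ω : ℕ → G | ω i ∈ S} :=
  (measurable_pi_apply i) (S.toFinite.measurableSet)

lemma path_prob [MeasurableSingletonClass G] {P : Matrix G G ℝ} {μ : G → Measure (ℕ → G)}
    (hP : IsStochastic P) (hμ : IsMarkovChain P μ) (S T : Set G) (x : G) (n : ℕ) :
    ∀ (t : ℕ) (w : ℕ → G),
    (μ x).real {ω | (∀ i ≤ t, ω i = w i) ∧ (∀ i, t < i → i ≤ t + n → ω i ∈ S) ∧ ω (t + n) ∈ T} =
      ((if w 0 = x then 1 else 0) * ∏ i ∈ Finset.range t, P (w i) (w (i + 1)))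
        * Rec P S T n (w t) := by
  haveI := hμ.1 x
  induction n with
  | zero =>
    intro t w
    by_cases hT : w t ∈ T
    · have : {ω : ℕ → G | (∀ i ≤ t, ω i = w i) ∧ (∀ i, t < i → i ≤ t + 0 → ω i ∈ S) ∧
          ω (t + 0) ∈ T} = {ω | ∀ i ≤ t, ω i = w i} := by
        ext ω
        constructor
        · exact fun h => h.1
        · intro h
          refine ⟨h, fun i h1 h2 => by omega, ?_⟩
          rw [add_zero, h t le_rfl]; exact hT
      rw [this, measureReal_def, hμ.2, ENNReal.toReal_ofReal]
      · simp [Rec, hT]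
      · refine mul_nonneg (by split_ifs <;> norm_num) (Finset.prod_nonneg fun i _ => hP.1 _ _)
    · have : {ω : ℕ → G | (∀ i ≤ t, ω i = w i) ∧ (∀ i, t < i → i ≤ t + 0 → ω i ∈ S) ∧
          ω (t + 0) ∈ T} = ∅ := by
        rw [Set.eq_empty_iff_forall_notMem]
        rintro ω ⟨h, -, h2⟩
        rw [add_zero, h t le_rfl] at h2
        exact hT h2
      rw [this]
      simp [Rec, hT]
  | succ n ih =>
    intro t w
    classical
    have hE : {ω : ℕ → G | (∀ i ≤ t, ω i = w i) ∧ (∀ i, t < i → i ≤ t + (n + 1) → ω i ∈ S) ∧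
          ω (t + (n + 1)) ∈ T} = ⋃ y ∈ Finset.univ.filter (· ∈ S),
          {ω : ℕ → G | (∀ i ≤ t + 1, ω i = Function.update w (t + 1) y i) ∧
            (∀ i, t + 1 < i → i ≤ t + 1 + n → ω i ∈ S) ∧ ω (t + 1 + n) ∈ T} := by
      have e : t + (n + 1) = t + 1 + n := by omega
      ext ω
      simp only [Set.mem_iUnion, Finset.mem_filter, Finset.mem_univ, true_and, exists_prop,
        Set.mem_ofPred_eq, e]
      constructor
      · rintro ⟨h1, h2, h3⟩
        refine ⟨ω (t + 1), h2 _ (by omega) (by omega), ?_, fun i hi hi' => h2 i (by omega) hi', h3⟩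
        intro i hi
        by_cases hit : i = t + 1
        · subst hit; simp
        · rw [Function.update_of_ne hit]; exact h1 i (by omega)
      · rintro ⟨y, hy, h1, h2, h3⟩
        refine ⟨fun i hi => ?_, fun i hi hi' => ?_, h3⟩
        · rw [h1 i (by omega), Function.update_of_ne (by omega)]
        · by_cases hit : i = t + 1
          · subst hit; rw [h1 _ le_rfl]; simpa using hy
          · exact h2 i (by omega) hi'
    rw [hE, measureReal_biUnion_finset]
    · simp only [Rec]
      rw [Finset.mul_sum, Finset.sum_filter]
      refine Finset.sum_congr rfl fun y _ => ?_
      by_cases hy : y ∈ S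
      · rw [if_pos hy, ih, Set.indicator_of_mem hy, Finset.prod_range_succ]
        have h0 : Function.update w (t + 1) y 0 = w 0 := Function.update_of_ne (by omega) _ _
        have h1 : Function.update w (t + 1) y t = w t := Function.update_of_ne (by omega) _ _
        have h2 : ∏ i ∈ Finset.range t, P (Function.update w (t + 1) y i)
            (Function.update w (t + 1) y (i + 1)) = ∏ i ∈ Finset.range t, P (w i) (w (i + 1)) := by
          refine Finset.prod_congr rfl fun i hi => ?_
          have := Finset.mem_range.1 hi
          rw [Function.update_of_ne (by omega), Function.update_of_ne (by omega)]
        rw [h0, h1, h2, Function.update_self]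
        ring
      · rw [if_neg hy, Set.indicator_of_notMem hy]; simp
    · intro y _ z _ hyz
      rw [Function.onFun, Set.disjoint_left]
      rintro ω ⟨h1, -⟩ ⟨h2, -⟩
      apply hyz
      have a := h1 (t + 1) le_rfl
      have b := h2 (t + 1) le_rfl
      simp at a b
      rw [← a, ← b]
    · intro y _
      have e : {ω : ℕ → G | (∀ i ≤ t + 1, ω i = Function.update w (t + 1) y i) ∧
            (∀ i, t + 1 < i → i ≤ t + 1 + n → ω i ∈ S) ∧ ω (t + 1 + n) ∈ T} =
          (⋂ i, ⋂ (_ : i ≤ t + 1), {ω : ℕ → G | ω i ∈ ({Function.update w (t + 1) y i} : Set G)}) ∩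
          ((⋂ i, ⋂ (_ : t + 1 < i), ⋂ (_ : i ≤ t + 1 + n), {ω : ℕ → G | ω i ∈ S}) ∩
            {ω : ℕ → G | ω (t + 1 + n) ∈ T}) := by
        ext ω
        simp
      rw [e]
      refine MeasurableSet.inter ?_ (MeasurableSet.inter ?_ (meas_coord T _))
      · exact MeasurableSet.iInter fun i => MeasurableSet.iInter fun _ => meas_coord _ i
      · exact MeasurableSet.iInter fun i => MeasurableSet.iInter fun _ =>
          MeasurableSet.iInter fun _ => meas_coord S i

lemma start_ae {P : Matrix G G ℝ} {μ : G → Measure (ℕ → G)} [MeasurableSingletonClass G]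
    (hμ : IsMarkovChain P μ) (x : G) : ∀ᵐ ω ∂ μ x, ω 0 = x := by
  haveI := hμ.1 x
  have h := hμ.2 x 0 (fun _ => x)
  have e : {ω : ℕ → G | ∀ i ≤ 0, ω i = x} = {ω | ω 0 = x} := by
    ext ω; simp
  rw [e] at h
  simp at h
  rw [ae_iff]
  exact (prob_compl_eq_zero_iff (meas_coord {x} 0)).2 h

lemma path_prob0 [MeasurableSingletonClass G] {P : Matrix G G ℝ} {μ : G → Measure (ℕ → G)}
    (hP : IsStochastic P) (hμ : IsMarkovChain P μ) (S T : Set G) (x : G) (n : ℕ) :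
    (μ x).real {ω | (∀ i, 0 < i → i ≤ n → ω i ∈ S) ∧ ω n ∈ T} = Rec P S T n x := by
  have h := path_prob hP hμ S T x n 0 (fun _ => x)
  simp only [Finset.range_zero, Finset.prod_empty, mul_one, if_true, one_mul, zero_add] at h
  rw [← h]
  apply measureReal_congr
  filter_upwards [start_ae hμ x] with ω hω
  apply propext
  show (_ ∧ _) ↔ (_ ∧ _ ∧ _)
  constructor
  · rintro ⟨h1, h2⟩
    refine ⟨fun i hi => ?_, h1, h2⟩
    obtain rfl : i = 0 := by omega
    exact hω
  · rintro ⟨-, h1, h2⟩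
    exact ⟨h1, h2⟩

lemma stat_hit [MeasurableSingletonClass G] {P : Matrix G G ℝ} {pi : G → ℝ}
    {μ : G → Measure (ℕ → G)}
    (hP : IsStochastic P) (hrev : IsReversible P pi) (hμ : IsMarkovChain P μ) (A : Set G) (n : ℕ) :
    ∑ y, pi y * (μ y).real {ω | ω n ∈ A} = piOf pi A := by
  have h : ∀ y, (μ y).real {ω | ω n ∈ A} = Rec P Set.univ A n y := fun y => by
    rw [← path_prob0 hP hμ]; simp
  simp only [h]
  clear h
  induction n with
  | zero =>
    refine Finset.sum_congr rfl fun x _ => ?_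
    by_cases hx : x ∈ A <;> simp [Rec, hx]
  | succ n ih =>
    rw [← ih, ← sum_col hP hrev (Rec P Set.univ A n)]
    refine Finset.sum_congr rfl fun x _ => ?_
    simp only [Rec, Set.indicator_univ, Finset.mul_sum]
    exact Finset.sum_congr rfl fun y _ => by ring

lemma survive [MeasurableSingletonClass G] {P : Matrix G G ℝ} {pi : G → ℝ}
    {μ : G → Measure (ℕ → G)}
    (hP : IsStochastic P) (hirr : IsIrreducible P) (hap : IsAperiodic P)
    (hrev : IsReversible P pi) (hμ : IsMarkovChain P μ) (B : Set G)
    (ρ : ℝ) (hρ : ρ = 1 - (1 - lam P pi) * piOf pi B) (hpos : 0 < ρ) (hb : 0 ≤ piOf pi B) (s : ℕ) :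
    ∑ y, pi y * (μ y).real {ω | ∀ i ≤ s, ω i ∉ B} ≤ ρ ^ s := by
  set V : ℕ → G → ℝ := fun n => Bᶜ.indicator (Rec P Bᶜ Set.univ n) with hV
  have h : ∀ y, (μ y).real {ω | ∀ i ≤ s, ω i ∉ B} ≤ V s y := fun y => by
    haveI := hμ.1 y
    by_cases hy : y ∈ B
    · have : (μ y).real {ω | ∀ i ≤ s, ω i ∉ B} = (μ y).real ∅ := by
        apply measureReal_congr
        filter_upwards [start_ae hμ y] with ω hω
        apply propext
        show (∀ i ≤ s, ω i ∉ B) ↔ False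
        simp only [iff_false]
        intro h
        exact h 0 (by omega) (by rwa [hω])
      rw [this]; simp [hV, hy]
    · have : V s y = Rec P Bᶜ Set.univ s y := by simp [hV, hy]
      rw [this, ← path_prob0 hP hμ]
      refine measureReal_mono ?_ (measure_ne_top _ _)
      intro ω hω
      exact ⟨fun i _ hi => hω i hi, trivial⟩
  have hN : ∀ n, nsq pi (V n) ≤ (ρ ^ n) ^ 2 := fun n => by
    induction n with
    | zero =>
      have : nsq pi (V 0) = 1 - piOf pi B := by
        rw [← piOf_compl hrev]
        refine Finset.sum_congr rfl fun x _ => ?_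
        by_cases hx : x ∈ B <;> simp [hV, Rec, hx]
      rw [this]; simp [hb]
    | succ n ih =>
      have := contract hP hirr hap hrev B (V (n + 1)) (V n) (fun x hx => by simp [hV, hx])
        (fun x hx => by simp [hV, hx]) (fun x hx => by simp [hV, hx, Rec]) ρ hρ hpos
      calc _ ≤ _ := this
        _ ≤ ρ ^ 2 * (ρ ^ n) ^ 2 := by gcongr
        _ = _ := by ring
  have h1 : ∑ y, pi y * (μ y).real {ω | ∀ i ≤ s, ω i ∉ B} ≤ ∑ y, pi y * V s y :=
    Finset.sum_le_sum fun y _ => mul_le_mul_of_nonneg_left (h y) (hrev.1 y).le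
  refine h1.trans ?_
  apply le_of_sq_le_sq _ (by positivity)
  refine le_trans ?_ (hN s)
  have := Finset.sum_sq_le_sum_mul_sum_of_sq_eq_mul Finset.univ
      (r := fun x => pi x * V s x) (f := pi) (g := fun x => pi x * V s x ^ 2)
      (fun x _ => (hrev.1 x).le)
      (fun x _ => mul_nonneg (hrev.1 x).le (sq_nonneg _))
      (fun x _ => by ring)
  rw [hrev.2.1, one_mul] at this
  exact this

lemma event_subset (A B : Set G) (s : ℕ) :
    {ω : ℕ → G | hit A ω < hit B ω} ⊆
      (⋃ n ∈ Finset.range s, {ω | ω n ∈ A}) ∪ {ω | ∀ i ≤ s, ω i ∉ B} := by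
  intro ω hω
  by_contra hcon
  simp only [Set.mem_union, Set.mem_iUnion, Finset.mem_range, Set.mem_ofPred_eq, not_or,
    not_exists, not_forall, not_not, exists_prop] at hcon
  obtain ⟨h1, i, hi, hiB⟩ := hcon
  have hB : hit B ω ≤ (s : ℕ∞) :=
    (sInf_le ⟨i, hiB, rfl⟩ : hit B ω ≤ (i : ℕ∞)).trans (by exact_mod_cast hi)
  have hA : (s : ℕ∞) ≤ hit A ω := by
    apply le_sInf
    rintro _ ⟨n, hn, rfl⟩
    have : s ≤ n := by
      by_contra hlt
      exact h1 n ⟨by omega, hn⟩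
    exact_mod_cast this
  exact absurd (lt_of_lt_of_le hω (hB.trans hA)) (lt_irrefl _)

/-- For disjoint nonempty `A, B ⊆ G` with `π(A) < π(B)`,
`Pr_π[T_A < T_B] ≤ (2/(1−λ))·(π(A)/π(B))·log(π(B)/π(A)) + π(A) + π(A)/π(B)`. -/
theorem stmt12 {G : Type*} [Fintype G] [DecidableEq G] [MeasurableSpace G] [MeasurableSingletonClass G]
    (P : Matrix G G ℝ) (pi : G → ℝ) (μ : G → Measure (ℕ → G))
    (hP : IsStochastic P) (hirr : IsIrreducible P) (hap : IsAperiodic P)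
    (hrev : IsReversible P pi) (hμ : IsMarkovChain P μ)
    (A B : Set G) (hA : A.Nonempty) (hB : B.Nonempty) (hdisj : Disjoint A B)
    (hlt : piOf pi A < piOf pi B) :
    ∑ y, pi y * (μ y {ω | hit A ω < hit B ω}).toReal ≤
      2 / (1 - lam P pi) * (piOf pi A / piOf pi B) *
          Real.log (piOf pi B / piOf pi A)
        + piOf pi A + piOf pi A / piOf pi B := by
  have hl1 := lam_lt_one hP hirr hap hrev
  have hl0 := lam_nonneg P pi
  have hapos : 0 < piOf pi A := by
    obtain ⟨x, hx⟩ := hA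
    refine Finset.sum_pos' (fun y _ => Set.indicator_nonneg (fun z _ => (hrev.1 z).le) y)
      ⟨x, Finset.mem_univ x, ?_⟩
    rw [Set.indicator_of_mem hx]; exact hrev.1 x
  have hab : piOf pi A + piOf pi B ≤ 1 := by
    rw [← hrev.2.1, piOf, piOf, ← Finset.sum_add_distrib]
    refine Finset.sum_le_sum fun x _ => ?_
    by_cases hx : x ∈ A
    · have hx' : x ∉ B := Set.disjoint_left.1 hdisj hx
      simp [hx, hx']
    · by_cases hx' : x ∈ B <;> simp [hx, hx', (hrev.1 x).le]
  set a := piOf pi A with ha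
  set b := piOf pi B with hb
  set l := lam P pi with hl
  have hbpos : 0 < b := hapos.trans hlt
  have hgb : 0 < (1 - l) * b := mul_pos (by linarith) hbpos
  have hρ : 0 < 1 - (1 - l) * b := by nlinarith
  have hlog : 0 < Real.log (b / a) := Real.log_pos (by rwa [one_lt_div hapos])
  set s := ⌈Real.log (b / a) / ((1 - l) * b)⌉₊ with hs
  have hs1 : (s : ℝ) ≤ Real.log (b / a) / ((1 - l) * b) + 1 :=
    (Nat.ceil_lt_add_one (by positivity)).le
  have hs2 : Real.log (b / a) ≤ (1 - l) * b * s := by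
    have := Nat.le_ceil (Real.log (b / a) / ((1 - l) * b))
    rw [div_le_iff₀ hgb] at this
    linarith
  have hpow : (1 - (1 - l) * b) ^ s ≤ a / b := by
    calc (1 - (1 - l) * b) ^ s ≤ (Real.exp (-((1 - l) * b))) ^ s := by
          gcongr
          exact Real.one_sub_le_exp_neg _
      _ = Real.exp (-((1 - l) * b * s)) := by
          rw [← Real.exp_nat_mul]; ring_nf
      _ ≤ Real.exp (-Real.log (b / a)) := by gcongr
      _ = a / b := by
          rw [Real.exp_neg, Real.exp_log (by positivity), inv_div]
  have hmain : ∑ y, pi y * (μ y {ω | hit A ω < hit B ω}).toReal ≤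
      s * a + (1 - (1 - l) * b) ^ s := by
    calc ∑ y, pi y * (μ y {ω | hit A ω < hit B ω}).toReal
        ≤ ∑ y, pi y * (∑ n ∈ Finset.range s, (μ y).real {ω | ω n ∈ A}
            + (μ y).real {ω | ∀ i ≤ s, ω i ∉ B}) := by
          refine Finset.sum_le_sum fun y _ => mul_le_mul_of_nonneg_left ?_ (hrev.1 y).le
          haveI := hμ.1 y
          calc (μ y).real {ω | hit A ω < hit B ω} ≤ _ := measureReal_mono (event_subset A B s)
            _ ≤ _ := measureReal_union_le _ _
            _ ≤ _ := by
              gcongr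
              exact measureReal_biUnion_finset_le _ _
      _ = ∑ n ∈ Finset.range s, (∑ y, pi y * (μ y).real {ω | ω n ∈ A})
            + ∑ y, pi y * (μ y).real {ω | ∀ i ≤ s, ω i ∉ B} := by
          rw [Finset.sum_comm, ← Finset.sum_add_distrib]
          refine Finset.sum_congr rfl fun y _ => ?_
          rw [mul_add, Finset.mul_sum]
      _ ≤ _ := by
          gcongr
          · simp only [stat_hit hP hrev hμ]
            simp [ha]
          · exact survive hP hirr hap hrev hμ B _ rfl hρ hbpos.le s
  have h1 : (s : ℝ) * a ≤ 1 / (1 - l) * (a / b) * Real.log (b / a) + a := by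
    calc (s : ℝ) * a ≤ (Real.log (b / a) / ((1 - l) * b) + 1) * a := by gcongr
      _ = _ := by
        have : (1 - l) ≠ 0 := by linarith
        field_simp
  have h2 : 1 / (1 - l) * (a / b) * Real.log (b / a) ≤ 2 / (1 - l) * (a / b) * Real.log (b / a) := by
    have : 0 < 1 - l := by linarith
    gcongr
    norm_num
  linarith

end HM
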